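/- arXiv:1511.06606 — 2 statements merged into one kernel-verified Lean document; each statement's English description precedes it below -/
import Mathlib

section
/- Let X ∈ {0,1}^{m×n} be an interval matrix, let V ∈ {0,1}^{n×k} be a matrix with exactly one entry equal to 1 in each row and zeros elsewhere, let t ∈ ℤ^k be an integer vector, and let v ∈ ℤ be an integer. Then every extreme point (vertex) of the polyhedron P = {w ∈ ℝ^n : X w ≥ v·𝟙, 0 ≤ w ≤ 𝟙, w ≤ V t} has all coordinates in {0,1}. -/
noncomputable section

/-- A 0–1 matrix is an interval matrix if each column's set of rows with entry 1 is a
block of consecutive indices: entries are 0 or 1, and the support of each column is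
order-convex. -/
def IsIntervalMatrix {m n : ℕ} (X : Matrix (Fin m) (Fin n) ℝ) : Prop :=
  (∀ i j, X i j = 0 ∨ X i j = 1) ∧
  ∀ j i₁ i₂ i₃, i₁ ≤ i₂ → i₂ ≤ i₃ → X i₁ j = 1 → X i₃ j = 1 → X i₂ j = 1

theorem key_kernel {ι : Type} [Fintype ι] [Nonempty ι] (p : ℕ) (Y : ℕ → ι → ℝ)
    (h0 : ∀ j, Y 0 j = 0) (hp : ∀ j, Y (p+1) j = 0)
    (h01 : ∀ r j, Y r j = 0 ∨ Y r j = 1)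
    (hint : ∀ j a b c, a ≤ b → b ≤ c → Y a j = 1 → Y c j = 1 → Y b j = 1)
    (w : ι → ℝ) (hw : ∀ j, 0 < w j ∧ w j < 1)
    (hz : ∀ r, ∃ z : ℤ, ∑ j, Y r j * w j = z) :
    ∃ d : ι → ℝ, d ≠ 0 ∧ ∀ r ≤ p + 1, ∑ j, Y r j * d j = 0 := by
  classical
  set D : ℕ → ι → ℝ := fun r j => Y (r+1) j - Y r j with hD
  have hDs : ∀ r (d : ι → ℝ), ∑ j, D r j * d j = ∑ j, Y (r+1) j * d j - ∑ j, Y r j * d j := by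
    intro r d
    simp [hD, sub_mul, Finset.sum_sub_distrib]
  suffices h : ∃ d : ι → ℝ, d ≠ 0 ∧ ∀ r < p + 1, ∑ j, D r j * d j = 0 by
    obtain ⟨d, hd, h⟩ := h
    refine ⟨d, hd, ?_⟩
    intro r
    induction r with
    | zero => intro _; simp [h0]
    | succ r ih =>
      intro hr
      have h1 := h r (by omega)
      rw [hDs, ih (by omega)] at h1
      linarith
  set N : Finset ℕ := (Finset.range (p+1)).filter (fun r => ∃ j, D r j ≠ 0) with hN
  have hcol : ∀ j, (N.filter (fun r => D r j ≠ 0)).card ≤ 2 := by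
    intro j
    have hsub : N.filter (fun r => D r j ≠ 0) ⊆
        N.filter (fun r => Y (r+1) j = 1 ∧ Y r j = 0) ∪
        N.filter (fun r => Y (r+1) j = 0 ∧ Y r j = 1) := by
      intro r hr
      simp only [Finset.mem_filter, Finset.mem_union] at hr ⊢
      have := hr.2
      simp only [hD] at this
      rcases h01 (r+1) j with h | h <;> rcases h01 r j with h' | h' <;> simp_all
    have hu : (N.filter (fun r => Y (r+1) j = 1 ∧ Y r j = 0)).card ≤ 1 := by
      rw [Finset.card_le_one]
      have aux : ∀ a b, a < b → Y (a+1) j = 1 → Y (b+1) j = 1 → Y b j = 0 → False := by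
        intro a b hab h1 h2 h3
        have := hint j (a+1) b (b+1) (by omega) (by omega) h1 h2
        rw [h3] at this; norm_num at this
      intro a ha b hb
      simp only [Finset.mem_filter] at ha hb
      rcases lt_trichotomy a b with h | h | h
      · exact (aux a b h ha.2.1 hb.2.1 hb.2.2).elim
      · exact h
      · exact (aux b a h hb.2.1 ha.2.1 ha.2.2).elim
    have hl : (N.filter (fun r => Y (r+1) j = 0 ∧ Y r j = 1)).card ≤ 1 := by
      rw [Finset.card_le_one]
      have aux : ∀ a b, a < b → Y a j = 1 → Y b j = 1 → Y (a+1) j = 0 → False := by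
        intro a b hab h1 h2 h3
        have := hint j a (a+1) b (by omega) (by omega) h1 h2
        rw [h3] at this; norm_num at this
      intro a ha b hb
      simp only [Finset.mem_filter] at ha hb
      rcases lt_trichotomy a b with h | h | h
      · exact (aux a b h ha.2.2 hb.2.2 ha.2.1).elim
      · exact h
      · exact (aux b a h hb.2.2 ha.2.2 hb.2.1).elim
    have h1 := Finset.card_le_card hsub
    have h2 := Finset.card_union_le (N.filter (fun r => Y (r+1) j = 1 ∧ Y r j = 0))
      (N.filter (fun r => Y (r+1) j = 0 ∧ Y r j = 1))
    omega
  have hrow : ∀ r ∈ N, 2 ≤ (Finset.univ.filter (fun j => D r j ≠ 0)).card := by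
    intro r hr
    simp only [hN, Finset.mem_filter] at hr
    obtain ⟨_, j, hj⟩ := hr
    by_contra hlt
    have hc1 : (Finset.univ.filter (fun j => D r j ≠ 0)).card ≤ 1 := by omega
    rw [Finset.card_le_one] at hc1
    have hother : ∀ i, i ≠ j → D r i = 0 := by
      intro i hi
      by_contra hne
      exact hi (hc1 i (by simp [hne]) j (by simp [hj]))
    have hsum : ∑ i, D r i * w i = D r j * w j := by
      apply Finset.sum_eq_single
      · intro i _ hi; simp [hother i hi]
      · simp
    rw [hDs] at hsum
    obtain ⟨z1, hz1⟩ := hz (r+1)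
    obtain ⟨z2, hz2⟩ := hz r
    rw [hz1, hz2] at hsum
    obtain ⟨hw0, hw1⟩ := hw j
    simp only [hD] at hsum hj
    rcases h01 (r+1) j with h | h <;> rcases h01 r j with h' | h' <;>
      rw [h, h'] at hsum hj
    · simp at hj
    · have e1 : (z2:ℝ) - z1 = w j := by linarith
      rw [← e1] at hw0 hw1
      have a1 : 0 < z2 - z1 := by exact_mod_cast hw0
      have a2 : z2 - z1 < 1 := by exact_mod_cast hw1
      omega
    · have e1 : (z1:ℝ) - z2 = w j := by linarith
      rw [← e1] at hw0 hw1
      have a1 : 0 < z1 - z2 := by exact_mod_cast hw0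
      have a2 : z1 - z2 < 1 := by exact_mod_cast hw1
      omega
    · simp at hj
  have hcount : N.card ≤ Fintype.card ι := by
    have := Finset.card_mul_le_card_mul (s := N) (t := (Finset.univ : Finset ι))
      (m := 2) (n := 2) (fun r j => D r j ≠ 0)
      (by intro r hr; simpa [Finset.bipartiteAbove] using hrow r hr)
      (by intro j _; simpa [Finset.bipartiteBelow] using hcol j)
    rw [Finset.card_univ] at this
    omega
  have hzero : ∀ r < p+1, r ∉ N → ∀ d : ι → ℝ, ∑ j, D r j * d j = 0 := by
    intro r hr hrN d
    simp only [hN, Finset.mem_filter, Finset.mem_range, not_and, not_exists, not_not] at hrN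
    simp [hrN hr]
  rcases N.eq_empty_or_nonempty with hNe | ⟨r0, hr0⟩
  · refine ⟨fun _ => 1, ?_, ?_⟩
    · intro h
      obtain ⟨i⟩ := ‹Nonempty ι›
      have := congrFun h i
      simp at this
    · intro r hr
      exact hzero r hr (by simp [hNe]) _
  · let M : Matrix (N.erase r0) ι ℝ := fun r j => D r j
    have hcard : Fintype.card (N.erase r0) < Fintype.card ι := by
      have h1 := Finset.card_erase_lt_of_mem hr0
      simp only [Fintype.card_coe]
      omega
    obtain ⟨d, hd, hne⟩ : ∃ d : ι → ℝ, M.mulVecLin d = 0 ∧ d ≠ 0 := by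
      have hk : LinearMap.ker M.mulVecLin ≠ ⊥ := by
        apply LinearMap.ker_ne_bot_of_finrank_lt
        simpa using hcard
      obtain ⟨d, hd, hne⟩ := Submodule.exists_mem_ne_zero_of_ne_bot hk
      exact ⟨d, by simpa using hd, hne⟩
    refine ⟨d, hne, ?_⟩
    have hoth : ∀ r < p+1, r ≠ r0 → ∑ j, D r j * d j = 0 := by
      intro r hr hrne
      by_cases hrN : r ∈ N
      · have := congrFun hd ⟨r, Finset.mem_erase.2 ⟨hrne, hrN⟩⟩
        exact this
      · exact hzero r hr hrN d
    have htot : ∑ r ∈ Finset.range (p+1), ∑ j, D r j * d j = 0 := by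
      simp only [hDs]
      rw [Finset.sum_range_sub (fun r => ∑ j, Y r j * d j)]
      simp [h0, hp]
    intro r hr
    by_cases h : r = r0
    · subst h
      rwa [Finset.sum_eq_single r] at htot
      · intro b hb hbr
        exact hoth b (Finset.mem_range.1 hb) hbr
      · intro h; simp at h; omega
    · exact hoth r hr h

/-- Every extreme point of the polyhedron
`P = {w : X w ≥ v·𝟙, 0 ≤ w ≤ 𝟙, w ≤ V t}`, where `X` is an interval 0–1 matrix, `V` is a
0–1 matrix with exactly one 1 per row, `t` is an integer vector and `v` an integer, has
all coordinates in `{0,1}`. -/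
theorem intervalMatrix_polyhedron_extremePoints_binary {m n k : ℕ}
    (X : Matrix (Fin m) (Fin n) ℝ) (hX : IsIntervalMatrix X)
    (V : Matrix (Fin n) (Fin k) ℝ)
    (hV01 : ∀ j l, V j l = 0 ∨ V j l = 1)
    (hVrow : ∀ j : Fin n, ∃! l : Fin k, V j l = 1)
    (t : Fin k → ℤ) (v : ℤ) :
    ∀ w ∈ Set.extremePoints ℝ
      {w : Fin n → ℝ |
        (∀ i : Fin m, (v : ℝ) ≤ ∑ j, X i j * w j) ∧
        (∀ j : Fin n, 0 ≤ w j ∧ w j ≤ 1) ∧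
        (∀ j : Fin n, w j ≤ ∑ l, V j l * (t l : ℝ))},
      ∀ j : Fin n, w j = 0 ∨ w j = 1 := by
  classical
  intro w hw j0
  by_contra hj0
  rw [mem_extremePoints] at hw
  obtain ⟨⟨hw1, hw2, hw3⟩, hext⟩ := hw
  let ι := {j : Fin n // ¬ (w j = 0 ∨ w j = 1)}
  haveI : Nonempty ι := ⟨⟨j0, hj0⟩⟩
  let T : Finset (Fin m) := Finset.univ.filter (fun i => ∑ j, X i j * w j = v)
  let f : Fin T.card ↪o Fin m := T.orderEmbOfFin rfl
  let Y : ℕ → Fin n → ℝ := fun r j =>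
    if h : 0 < r ∧ r - 1 < T.card then X (f ⟨r-1, h.2⟩) j else 0
  have hY01 : ∀ r j, Y r j = 0 ∨ Y r j = 1 := by
    intro r j
    by_cases h : 0 < r ∧ r - 1 < T.card
    · simp only [Y, dif_pos h]; exact hX.1 _ _
    · simp [Y, dif_neg h]
  have hYpos : ∀ r j, Y r j = 1 → 0 < r ∧ r - 1 < T.card := by
    intro r j h
    by_contra hn
    simp [Y, dif_neg hn] at h
  -- sums over the fractional coordinates
  have hsplit : ∀ g : Fin n → ℝ, ∑ j, g j = ∑ j : ι, g j +
      ∑ j : {j : Fin n // ¬ ¬ (w j = 0 ∨ w j = 1)}, g j := by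
    intro g
    exact (Fintype.sum_subtype_add_sum_subtype (fun j => ¬ (w j = 0 ∨ w j = 1)) g).symm
  obtain ⟨d, hdne, hd⟩ := key_kernel (ι := ι) T.card (fun r j => Y r j)
    (by intro j; simp [Y]) (by intro j; simp [Y]) (fun r j => hY01 r j)
    (by
      intro j a b c hab hbc ha hc
      have pa := hYpos _ _ ha
      have pc := hYpos _ _ hc
      have pb : 0 < b ∧ b - 1 < T.card := by omega
      simp only [Y, dif_pos pa, dif_pos pb, dif_pos pc] at ha hc ⊢
      refine hX.2 j _ _ _ (f.monotone ?_) (f.monotone ?_) ha hc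
      · simp only [Fin.mk_le_mk]; omega
      · simp only [Fin.mk_le_mk]; omega)
    (fun j => w j)
    (by
      intro j
      have h1 := hw2 j
      have h2 := j.2
      push Not at h2
      exact ⟨lt_of_le_of_ne h1.1 (Ne.symm h2.1), lt_of_le_of_ne h1.2 h2.2⟩)
    (by
      intro r
      have hint : ∃ z : ℤ, ∑ j, Y r j * w j = z := by
        by_cases h : 0 < r ∧ r - 1 < T.card
        · refine ⟨v, ?_⟩
          simp only [Y, dif_pos h]
          have : f ⟨r-1, h.2⟩ ∈ T := Finset.orderEmbOfFin_mem _ _ _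
          exact (Finset.mem_filter.1 this).2
        · exact ⟨0, by simp [Y, dif_neg h]⟩
      have hrest : ∃ z : ℤ, ∑ j : {j : Fin n // ¬ ¬ (w j = 0 ∨ w j = 1)}, Y r j * w j = z := by
        have : ∀ j : {j : Fin n // ¬ ¬ (w j = 0 ∨ w j = 1)}, ∃ z : ℤ, Y r j * w j = z := by
          intro j
          rcases not_not.1 j.2 with h | h <;> rcases hY01 r j with h' | h' <;> rw [h, h']
          · exact ⟨0, by simp⟩
          · exact ⟨0, by simp⟩
          · exact ⟨0, by simp⟩
          · exact ⟨1, by simp⟩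
        choose z hz using this
        exact ⟨∑ j, z j, by push_cast; exact Finset.sum_congr rfl (fun j _ => hz j)⟩
      obtain ⟨z1, h1⟩ := hint
      obtain ⟨z2, h2⟩ := hrest
      rw [hsplit, h2] at h1
      exact ⟨z1 - z2, by push_cast; linarith⟩)
  let e : Fin n → ℝ := fun j => if h : ¬ (w j = 0 ∨ w j = 1) then d ⟨j, h⟩ else 0
  have he1 : ∀ j : ι, e j = d j := by
    intro j
    exact dif_pos j.2
  have he0 : ∀ j, (w j = 0 ∨ w j = 1) → e j = 0 := by
    intro j h
    simp only [e, dif_neg (not_not.2 h)]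
  have hene : e ≠ 0 := by
    intro h
    apply hdne
    funext j
    rw [← he1, h]; rfl
  have heT : ∀ i ∈ T, ∑ j, X i j * e j = 0 := by
    intro i hi
    have : i ∈ Set.range f := by
      simp only [f, Finset.range_orderEmbOfFin]; exact hi
    obtain ⟨r, rfl⟩ := this
    have h1 := hd (r + 1) (by omega)
    have h2 : ∀ j, Y (r + 1) j = X (f r) j := by
      intro j
      simp [Y]
    rw [hsplit]
    have h3 : ∑ j : {j : Fin n // ¬ ¬ (w j = 0 ∨ w j = 1)}, X (f r) j * e j = 0 :=
      Finset.sum_eq_zero (fun j _ => by rw [he0 j (not_not.1 j.2), mul_zero])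
    rw [h3, add_zero]
    refine Eq.trans ?_ h1
    exact Finset.sum_congr rfl (fun j _ => by rw [he1, h2])
  -- eventually feasible
  have hev : ∀ᶠ ε : ℝ in nhds 0, (w + ε • e) ∈ {w : Fin n → ℝ |
        (∀ i : Fin m, (v : ℝ) ≤ ∑ j, X i j * w j) ∧
        (∀ j : Fin n, 0 ≤ w j ∧ w j ≤ 1) ∧
        (∀ j : Fin n, w j ≤ ∑ l, V j l * (t l : ℝ))} := by
    have hlt : ∀ j, ¬ (w j = 0 ∨ w j = 1) →
        0 < w j ∧ w j < 1 ∧ w j < ∑ l, V j l * (t l : ℝ) := by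
      intro j h
      push Not at h
      have h0 : 0 < w j := lt_of_le_of_ne (hw2 j).1 (Ne.symm h.1)
      have h1 : w j < 1 := lt_of_le_of_ne (hw2 j).2 h.2
      refine ⟨h0, h1, ?_⟩
      have : ∀ l, ∃ z : ℤ, V j l * (t l : ℝ) = z := by
        intro l
        rcases hV01 j l with h | h <;> rw [h]
        · exact ⟨0, by simp⟩
        · exact ⟨t l, by simp⟩
      choose z hz using this
      have hs : ∑ l, V j l * (t l : ℝ) = ((∑ l, z l : ℤ) : ℝ) := by
        push_cast; exact Finset.sum_congr rfl (fun l _ => hz l)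
      have h3 := hw3 j
      rw [hs] at h3 ⊢
      have h4 : (0 : ℤ) < ∑ l, z l := by exact_mod_cast lt_of_lt_of_le h0 h3
      have h5 : (1 : ℝ) ≤ ((∑ l, z l : ℤ) : ℝ) := by exact_mod_cast h4
      linarith
    have hcont : ∀ j, Filter.Tendsto (fun ε : ℝ => (w + ε • e) j) (nhds 0) (nhds (w j)) := by
      intro j
      have : Continuous (fun ε : ℝ => (w + ε • e) j) := by
        simp only [Pi.add_apply, Pi.smul_apply, smul_eq_mul]; fun_prop
      simpa using this.tendsto 0
    have hfix : ∀ j, (w j = 0 ∨ w j = 1) → ∀ ε : ℝ, (w + ε • e) j = w j := by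
      intro j h ε
      simp [he0 j h]
    refine Filter.Eventually.and ?_ (Filter.Eventually.and ?_ ?_)
    · rw [Filter.eventually_all]
      intro i
      by_cases hi : i ∈ T
      · refine Filter.Eventually.of_forall (fun ε => ?_)
        have h1 : ∑ j, X i j * (w + ε • e) j = ∑ j, X i j * w j + ε * ∑ j, X i j * e j := by
          rw [Finset.mul_sum, ← Finset.sum_add_distrib]
          refine Finset.sum_congr rfl (fun j _ => ?_)
          simp only [Pi.add_apply, Pi.smul_apply, smul_eq_mul]; ring
        rw [h1, heT i hi, mul_zero, add_zero]
        exact hw1 i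
      · have hs : (v : ℝ) < ∑ j, X i j * w j := by
          refine lt_of_le_of_ne (hw1 i) (fun h => hi ?_)
          simp [T, h.symm]
        have ht : Filter.Tendsto (fun ε : ℝ => ∑ j, X i j * (w + ε • e) j) (nhds 0)
            (nhds (∑ j, X i j * w j)) :=
          tendsto_finsetSum _ (fun j _ => (hcont j).const_mul _)
        exact (ht.eventually_const_lt hs).mono (fun _ h => h.le)
    · rw [Filter.eventually_all]
      intro j
      by_cases h : w j = 0 ∨ w j = 1
      · exact Filter.Eventually.of_forall (fun ε => by rw [hfix j h]; exact hw2 j)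
      · obtain ⟨a, b, _⟩ := hlt j h
        filter_upwards [(hcont j).eventually_const_lt a, (hcont j).eventually_lt_const b]
          with ε h1 h2
        exact ⟨h1.le, h2.le⟩
    · rw [Filter.eventually_all]
      intro j
      by_cases h : w j = 0 ∨ w j = 1
      · exact Filter.Eventually.of_forall (fun ε => by rw [hfix j h]; exact hw3 j)
      · obtain ⟨_, _, c⟩ := hlt j h
        exact ((hcont j).eventually_lt_const c).mono (fun _ h => h.le)
  rw [Metric.eventually_nhds_iff] at hev
  obtain ⟨δ, hδ, hev⟩ := hev
  have hp := hev (y := δ/2) (by rw [Real.dist_eq, sub_zero, abs_of_pos (by linarith)]; linarith)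
  have hm := hev (y := -(δ/2)) (by
    rw [Real.dist_eq, sub_zero, abs_neg, abs_of_pos (by linarith)]; linarith)
  have hseg : w ∈ openSegment ℝ (w + (δ/2) • e) (w + (-(δ/2)) • e) := by
    refine ⟨1/2, 1/2, by norm_num, by norm_num, by norm_num, ?_⟩
    funext j
    simp only [Pi.add_apply, Pi.smul_apply, smul_eq_mul]; ring
  have hfin := (hext _ hp _ hm hseg).1
  apply hene
  funext j
  have := congrFun hfin j
  simp only [Pi.add_apply, Pi.smul_apply, smul_eq_mul] at this
  have h2 : δ/2 * e j = 0 := by linarith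
  rcases mul_eq_zero.1 h2 with h | h
  · linarith
  · simpa using h
end
end

section
/- Let w be a finite word of length n ≥ 1 over an arbitrary alphabet. For each nonempty factor (contiguous substring) s of w, let E(s) ⊆ {1, …, n} be the set of positions at which an occurrence of s in w ends. Then the number of distinct sets E(s), as s ranges over all nonempty factors of w, is at most 2n − 1. -/
noncomputable section

/-- The set of ending positions (in `{1, …, n}`) of occurrences of the factor `s`
in the word `w`: position `j` is an end position if `s = c_{j−|s|+1} ⋯ c_j`. -/
def endSet {α : Type*} (w s : List α) : Set ℕ :=
  {j : ℕ | s.length ≤ j ∧ j ≤ w.length ∧ (w.take j).drop (j - s.length) = s}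

theorem laminar_card (n : ℕ) : ∀ U : Finset ℕ, U.card = n → U.Nonempty → ∀ F : Finset (Set ℕ),
    (∀ A ∈ F, A.Nonempty ∧ A ⊆ (U : Set ℕ)) →
    (∀ A ∈ F, ∀ B ∈ F, Disjoint A B ∨ A ⊆ B ∨ B ⊆ A) → F.card + 1 ≤ 2 * U.card := by
  classical
  induction n using Nat.strong_induction_on with
  | _ n ih =>
  intro U hn hU F hF hL
  have hUpos := hU.card_pos
  have hE : F.card ≤ (F.erase (U : Set ℕ)).card + 1 := by
    have := Finset.pred_card_le_card_erase (s := F) (a := (U : Set ℕ))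
    omega
  rcases (F.erase (U : Set ℕ)).eq_empty_or_nonempty with h0 | h0
  · rw [h0, Finset.card_empty] at hE
    omega
  obtain ⟨A, hA⟩ := Finset.exists_maximal h0
  have hAm := Finset.mem_erase.1 hA.prop
  obtain ⟨hAne, hAU⟩ := hF A hAm.2
  obtain ⟨V, rfl⟩ := (U.finite_toSet.subset hAU).exists_finset_coe
  have hVU : V ⊂ U := by
    refine Finset.ssubset_iff_subset_ne.2 ⟨by exact_mod_cast hAU, ?_⟩
    rintro rfl
    exact hAm.1 rfl
  have hVc := Finset.card_lt_card hVU
  have hVne : V.Nonempty := by exact_mod_cast hAne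
  have hVpos := hVne.card_pos
  have hsd := Finset.card_sdiff_add_card_eq_card hVU.1
  have h1 := ih V.card (by omega) V rfl hVne
    ((F.erase (U : Set ℕ)).filter (fun B => B ⊆ (V : Set ℕ)))
    (by
      intro B hB
      simp only [Finset.mem_filter, Finset.mem_erase] at hB
      exact ⟨(hF B hB.1.2).1, hB.2⟩)
    (by
      intro B hB C hC
      simp only [Finset.mem_filter, Finset.mem_erase] at hB hC
      exact hL B hB.1.2 C hC.1.2)
  have h2 := ih (U \ V).card (by omega) (U \ V) rfl (Finset.card_pos.1 (by omega))
    ((F.erase (U : Set ℕ)).filter (fun B => ¬ B ⊆ (V : Set ℕ)))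
    (by
      intro B hB
      have hB' := hB
      simp only [Finset.mem_filter, Finset.mem_erase] at hB
      refine ⟨(hF B hB.1.2).1, ?_⟩
      rw [Finset.coe_sdiff]
      refine Set.subset_diff.2 ⟨(hF B hB.1.2).2, ?_⟩
      rcases hL B hB.1.2 V hAm.2 with h | h | h
      · exact h
      · exact absurd h hB.2
      · exact absurd (hA.le_of_ge (Finset.mem_filter.1 hB').1 h) hB.2)
    (by
      intro B hB C hC
      simp only [Finset.mem_filter, Finset.mem_erase] at hB hC
      exact hL B hB.1.2 C hC.1.2)
  have h3 := Finset.card_filter_add_card_filter_not (s := F.erase (U : Set ℕ)) (fun B => B ⊆ (V : Set ℕ))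
  omega

theorem mem_endSet {α : Type*} (w s : List α) (j : ℕ) :
    j ∈ endSet w s ↔ j ≤ w.length ∧ s <:+ w.take j := by
  unfold endSet
  simp only [Set.mem_setOf_eq]
  constructor
  · rintro ⟨_, h2, h3⟩
    exact ⟨h2, h3 ▸ List.drop_suffix _ _⟩
  · rintro ⟨h1, h2⟩
    have hl := h2.length_le
    rw [List.length_take, min_eq_left h1] at hl
    refine ⟨hl, h1, ?_⟩
    have := List.suffix_iff_eq_drop.1 h2
    rw [List.length_take, min_eq_left h1] at this
    exact this.symm

theorem endSet_anti {α : Type*} (w s t : List α) (h : s <:+ t) : endSet w t ⊆ endSet w s := by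
  intro j hj
  rw [mem_endSet] at *
  exact ⟨hj.1, h.trans hj.2⟩

theorem endSet_laminar {α : Type*} (w s t : List α) :
    Disjoint (endSet w s) (endSet w t) ∨ endSet w s ⊆ endSet w t ∨ endSet w t ⊆ endSet w s := by
  by_cases h : Disjoint (endSet w s) (endSet w t)
  · exact Or.inl h
  right
  obtain ⟨j, h1, h2⟩ := Set.not_disjoint_iff.1 h
  rw [mem_endSet] at h1 h2
  rcases List.suffix_or_suffix_of_suffix h1.2 h2.2 with h | h
  · exact Or.inr (endSet_anti _ _ _ h)
  · exact Or.inl (endSet_anti _ _ _ h)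

theorem endSet_nonempty {α : Type*} (w s : List α) (h : s <:+: w) : (endSet w s).Nonempty := by
  obtain ⟨a, b, rfl⟩ := h
  refine ⟨(a ++ s).length, ?_⟩
  rw [mem_endSet]
  refine ⟨by simp, ?_⟩
  rw [List.take_left]
  exact List.suffix_append _ _

theorem endSet_subset {α : Type*} (w s : List α) (h : s ≠ []) :
    endSet w s ⊆ (Finset.Icc 1 w.length : Finset ℕ) := by
  rintro j ⟨h1, h2, -⟩
  have := List.length_pos_iff.2 h
  simp only [Finset.coe_Icc, Set.mem_Icc]
  omega

/-- For a word `w` of length `n ≥ 1`, the number of distinct ending-position sets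
`E(s)`, as `s` ranges over all nonempty factors (contiguous substrings) of `w`,
is at most `2n − 1`. -/
theorem card_endSets_le {α : Type*} (w : List α) (hw : 1 ≤ w.length) :
    {E : Set ℕ | ∃ s : List α, s ≠ [] ∧ s <:+: w ∧ E = endSet w s}.Finite ∧
    {E : Set ℕ | ∃ s : List α, s ≠ [] ∧ s <:+: w ∧ E = endSet w s}.ncard ≤
      2 * w.length - 1 := by
  have hfin : {E : Set ℕ | ∃ s : List α, s ≠ [] ∧ s <:+: w ∧ E = endSet w s}.Finite := by
    refine (Finset.finite_toSet (Finset.Icc 1 w.length)).finite_subsets.subset ?_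
    rintro E ⟨s, hs, -, rfl⟩
    exact endSet_subset w s hs
  refine ⟨hfin, ?_⟩
  rw [Set.ncard_eq_toFinset_card _ hfin]
  have := laminar_card _ (Finset.Icc 1 w.length) rfl (Finset.nonempty_Icc.2 hw) hfin.toFinset
    (by
      intro A hA
      obtain ⟨s, hs, hw, rfl⟩ := hfin.mem_toFinset.1 hA
      exact ⟨endSet_nonempty w s hw, endSet_subset w s hs⟩)
    (by
      intro A hA B hB
      obtain ⟨s, -, -, rfl⟩ := hfin.mem_toFinset.1 hA
      obtain ⟨t, -, -, rfl⟩ := hfin.mem_toFinset.1 hB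
      exact endSet_laminar w s t)
  rw [Nat.card_Icc] at this
  omega
end
end
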